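/- (von Neumann's inequality) Let T be a bounded linear operator on a complex Hilbert space with ‖T‖ ≤ 1, and let p be a polynomial with complex coefficients. Then ‖p(T)‖ ≤ sup_{|z| ≤ 1} |p(z)|. -/

import Mathlib

open Metric Polynomial

/-!
Write `1 - star a * a = star d * d`. For a strict contraction `a`, the sequence `x k = d * a ^ k`
satisfies `∑ k, star (x k) * x k = 1`, and multiplying `a` on the right of `x` is the same as
translating `x` by one step. Thus `p(a)` is governed by `p` evaluated at a translation, and the
Fourier transform turns the latter into multiplication by values of `p` on the unit circle. To stay
with finite sums, the sequence is truncated and wrapped around a cyclic group: the terms spoiled by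
the wrap-around only increase the sum that has to be bounded from below, so they can be dropped.
-/

open Finset Filter Topology ComplexConjugate

section Translation

/-- The polynomial `p` in the translation operator `x ↦ x (· + h)`, applied to `x`. -/
def translationAeval {R G A : Type*} [Semiring R] [AddMonoid G] [AddCommMonoid A] [Module R A]
    (p : R[X]) (h : G) (x : G → A) (g : G) : A :=
  ∑ j ∈ range (p.natDegree + 1), p.coeff j • x (g + j • h)

theorem fin_val_add_nsmul_one {n j : ℕ} (i : Fin (n + 1)) (h : i + j ≤ n) :
    ((i + j • 1 : Fin (n + 1)) : ℕ) = i + j := by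
  induction j with
  | zero => simp
  | succ j ih =>
    have hj := ih (by omega)
    rw [succ_nsmul, ← add_assoc, Fin.val_add_one_of_lt, hj, add_assoc]
    rw [Fin.lt_def, hj, Fin.val_last]
    omega

theorem translationAeval_mul_pow {R A : Type*} [CommSemiring R] [Semiring A] [Algebra R A]
    {p : R[X]} {n : ℕ} (a d : A) (i : Fin (n + 1)) (hi : i + p.natDegree ≤ n) :
    translationAeval p 1 (fun k : Fin (n + 1) => d * a ^ (k : ℕ)) i
      = d * a ^ (i : ℕ) * aeval a p := by
  rw [translationAeval, aeval_eq_sum_range, mul_sum]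
  refine sum_congr rfl fun j hj => ?_
  have hval : ((i + j • 1 : Fin (n + 1)) : ℕ) = i + j := by
    rw [mem_range] at hj
    exact fin_val_add_nsmul_one i (by omega)
  rw [hval, pow_add, mul_smul_comm, mul_assoc d]

end Translation

section Fourier

variable {G A : Type*} [AddCommGroup G] [Fintype G]

/-- The (unnormalised) Fourier coefficient at the character `ψ` of a function `x` on a finite
abelian group, with values in a complex vector space. The character is not conjugated. -/
def fourierSum [AddCommMonoid A] [Module ℂ A] (ψ : AddChar G ℂ) (x : G → A) : A :=
  ∑ g, ψ g • x g

theorem fourierSum_translate [AddCommMonoid A] [Module ℂ A] (ψ : AddChar G ℂ) (h : G)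
    (x : G → A) : fourierSum ψ (fun g => x (g + h)) = ψ (-h) • fourierSum ψ x := by
  simp only [fourierSum, smul_sum, smul_smul, ← AddChar.map_add_eq_mul]
  exact Fintype.sum_equiv (Equiv.addRight h) _ _ fun g => by simp

theorem fourierSum_translationAeval [AddCommMonoid A] [Module ℂ A] (ψ : AddChar G ℂ) (p : ℂ[X])
    (h : G) (x : G → A) :
    fourierSum ψ (translationAeval p h x) = p.eval (ψ (-h)) • fourierSum ψ x := by
  calc fourierSum ψ (translationAeval p h x)
      = ∑ j ∈ range (p.natDegree + 1), p.coeff j • fourierSum ψ (fun g => x (g + j • h)) := by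
        simp only [fourierSum, translationAeval, smul_sum, smul_comm (ψ _)]
        exact sum_comm
    _ = p.eval (ψ (-h)) • fourierSum ψ x := by
        simp only [fourierSum_translate, ← smul_neg, AddChar.map_nsmul_eq_pow, eval_eq_sum_range,
          sum_smul, smul_smul]

theorem sum_conj_addChar_mul_eq_ite [DecidableEq G] (g h : G) :
    ∑ ψ : AddChar G ℂ, conj (ψ g) * ψ h = if g = h then (Fintype.card G : ℂ) else 0 := by
  simp only [← AddChar.map_neg_eq_conj, ← AddChar.map_add_eq_mul, AddChar.sum_apply_eq_ite,
    neg_add_eq_zero]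

theorem sum_star_fourierSum_mul_fourierSum [NonUnitalSemiring A] [StarRing A] [Module ℂ A]
    [IsScalarTower ℂ A A] [SMulCommClass ℂ A A] [StarModule ℂ A] (x : G → A) :
    ∑ ψ : AddChar G ℂ, star (fourierSum ψ x) * fourierSum ψ x
      = (Fintype.card G : ℂ) • ∑ g, star (x g) * x g := by
  classical
  calc ∑ ψ : AddChar G ℂ, star (fourierSum ψ x) * fourierSum ψ x
      = ∑ ψ : AddChar G ℂ, ∑ g, ∑ h, (conj (ψ g) * ψ h) • (star (x g) * x h) := by
        simp only [fourierSum, star_sum, star_smul, sum_mul_sum, smul_mul_smul_comm,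
          RCLike.star_def]
    _ = ∑ g, ∑ h, (∑ ψ : AddChar G ℂ, conj (ψ g) * ψ h) • (star (x g) * x h) := by
        rw [sum_comm]
        refine sum_congr rfl fun g _ => ?_
        rw [sum_comm]
        simp only [sum_smul]
    _ = (Fintype.card G : ℂ) • ∑ g, star (x g) * x g := by
        simp only [sum_conj_addChar_mul_eq_ite, ite_smul, zero_smul, sum_ite_eq, mem_univ, if_true,
          smul_sum]

theorem sum_star_translationAeval_mul_self_le [NonUnitalCStarAlgebra A] [PartialOrder A]
    [StarOrderedRing A] {p : ℂ[X]} {M : ℝ} (hp : ∀ z ∈ sphere (0 : ℂ) 1, ‖p.eval z‖ ≤ M) (h : G)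
    (x : G → A) :
    ∑ g, star (translationAeval p h x g) * translationAeval p h x g
      ≤ M ^ 2 • ∑ g, star (x g) * x g := by
  have hψ (ψ : AddChar G ℂ) :
      star (fourierSum ψ (translationAeval p h x)) * fourierSum ψ (translationAeval p h x)
        ≤ M ^ 2 • (star (fourierSum ψ x) * fourierSum ψ x) := by
    have hM : ‖p.eval (ψ (-h))‖ ≤ M := hp _ (by simp)
    rw [fourierSum_translationAeval, star_smul, smul_mul_smul_comm, RCLike.star_def,
      RCLike.conj_mul, ← RCLike.ofReal_pow, RCLike.ofReal_eq_complex_ofReal, Complex.coe_smul]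
    gcongr
    exact star_mul_self_nonneg _
  have hcard : (0 : ℝ) < Fintype.card G := by exact_mod_cast Fintype.card_pos
  have hsum := sum_le_sum fun ψ (_ : ψ ∈ univ) => hψ ψ
  rw [← smul_sum, sum_star_fourierSum_mul_fourierSum, sum_star_fourierSum_mul_fourierSum,
    ← Complex.ofReal_natCast, Complex.coe_smul, Complex.coe_smul, smul_comm] at hsum
  exact le_of_smul_le_smul_left hsum hcard

end Fourier

theorem sum_star_mul_pow_mul_self_eq_sub {A : Type*} [Ring A] [StarRing A] {a d : A}
    (hd : star d * d = 1 - star a * a) (b : A) (n : ℕ) :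
    ∑ k ∈ range n, star (d * a ^ k * b) * (d * a ^ k * b)
      = star b * b - star (a ^ n * b) * (a ^ n * b) := by
  calc ∑ k ∈ range n, star (d * a ^ k * b) * (d * a ^ k * b)
      = ∑ k ∈ range n, (star (a ^ k * b) * (a ^ k * b)
          - star (a ^ (k + 1) * b) * (a ^ (k + 1) * b)) := by
        refine sum_congr rfl fun k _ => ?_
        calc star (d * a ^ k * b) * (d * a ^ k * b)
            = star (a ^ k * b) * (star d * d) * (a ^ k * b) := by simp only [star_mul, mul_assoc]
          _ = _ := by
            rw [hd]
            simp only [pow_succ', star_mul]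
            noncomm_ring
    _ = star b * b - star (a ^ n * b) * (a ^ n * b) := by
        rw [sum_range_sub']
        simp

section CStarAlgebra

variable {A : Type*} [CStarAlgebra A] {a : A} {p : ℂ[X]} {M : ℝ}

theorem exists_star_mul_self_eq_one_sub_star_mul_self (ha : ‖a‖ ≤ 1) :
    ∃ d : A, star d * d = 1 - star a * a := by
  let _ := CStarAlgebra.spectralOrder A
  have := CStarAlgebra.spectralOrderedRing A
  have hle : star a * a ≤ 1 := by
    refine (CStarAlgebra.norm_le_one_iff_of_nonneg _ (star_mul_self_nonneg a)).1 ?_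
    rw [CStarRing.norm_star_mul_self]
    exact mul_le_one₀ ha (norm_nonneg a) ha
  obtain ⟨d, hd⟩ := CStarAlgebra.nonneg_iff_eq_star_mul_self.1 (sub_nonneg.2 hle)
  exact ⟨d, hd.symm⟩

theorem sum_star_mul_pow_mul_aeval_le [PartialOrder A] [StarOrderedRing A]
    (hp : ∀ z ∈ sphere (0 : ℂ) 1, ‖p.eval z‖ ≤ M) (a d : A) (n : ℕ) :
    ∑ k ∈ range n, star (d * a ^ k * aeval a p) * (d * a ^ k * aeval a p)
      ≤ M ^ 2 • ∑ k ∈ range (n + p.natDegree + 1), star (d * a ^ k) * (d * a ^ k) := by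
  let x : Fin (n + p.natDegree + 1) → A := fun k => d * a ^ (k : ℕ)
  let y := translationAeval p 1 x
  let ι : Fin n ↪ Fin (n + p.natDegree + 1) := Fin.castLEEmb (by omega)
  have hy (k : Fin n) : y (ι k) = d * a ^ (k : ℕ) * aeval a p :=
    translationAeval_mul_pow a d (ι k) (by simp [ι])
  calc ∑ k ∈ range n, star (d * a ^ k * aeval a p) * (d * a ^ k * aeval a p)
      = ∑ k : Fin n, star (y (ι k)) * y (ι k) := by
        simp only [hy]
        exact (Fin.sum_univ_eq_sum_range
          (fun k => star (d * a ^ k * aeval a p) * (d * a ^ k * aeval a p)) n).symm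
    _ = ∑ i ∈ univ.map ι, star (y i) * y i := (sum_map univ ι fun i => star (y i) * y i).symm
    _ ≤ ∑ i, star (y i) * y i :=
        sum_le_univ_sum_of_nonneg fun i => star_mul_self_nonneg (y i)
    _ ≤ M ^ 2 • ∑ i, star (x i) * x i := sum_star_translationAeval_mul_self_le hp 1 x
    _ = M ^ 2 • ∑ k ∈ range (n + p.natDegree + 1), star (d * a ^ k) * (d * a ^ k) := by
        rw [← Fin.sum_univ_eq_sum_range (fun k => star (d * a ^ k) * (d * a ^ k))]

theorem star_aeval_mul_aeval_sub_le [PartialOrder A] [StarOrderedRing A] (ha : ‖a‖ ≤ 1)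
    (hp : ∀ z ∈ sphere (0 : ℂ) 1, ‖p.eval z‖ ≤ M) (n : ℕ) :
    star (aeval a p) * aeval a p - star (a ^ n * aeval a p) * (a ^ n * aeval a p)
      ≤ algebraMap ℝ A (M ^ 2) := by
  obtain ⟨d, hd⟩ := exists_star_mul_self_eq_one_sub_star_mul_self ha
  have hsum (N : ℕ) : ∑ k ∈ range N, star (d * a ^ k) * (d * a ^ k) ≤ 1 := by
    have htele := sum_star_mul_pow_mul_self_eq_sub hd 1 N
    simp only [mul_one, star_one] at htele
    rw [htele]
    exact sub_le_self 1 (star_mul_self_nonneg (a ^ N))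
  calc star (aeval a p) * aeval a p - star (a ^ n * aeval a p) * (a ^ n * aeval a p)
      = ∑ k ∈ range n, star (d * a ^ k * aeval a p) * (d * a ^ k * aeval a p) :=
        (sum_star_mul_pow_mul_self_eq_sub hd (aeval a p) n).symm
    _ ≤ M ^ 2 • ∑ k ∈ range (n + p.natDegree + 1), star (d * a ^ k) * (d * a ^ k) :=
        sum_star_mul_pow_mul_aeval_le hp a d n
    _ ≤ M ^ 2 • 1 := smul_le_smul_of_nonneg_left (hsum _) (sq_nonneg M)
    _ = algebraMap ℝ A (M ^ 2) := (Algebra.algebraMap_eq_smul_one _).symm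

theorem norm_aeval_le_of_norm_lt_one (ha : ‖a‖ < 1)
    (hp : ∀ z ∈ sphere (0 : ℂ) 1, ‖p.eval z‖ ≤ M) : ‖aeval a p‖ ≤ M := by
  let _ := CStarAlgebra.spectralOrder A
  have := CStarAlgebra.spectralOrderedRing A
  have hM : 0 ≤ M := (norm_nonneg _).trans (hp 1 (by simp))
  set b := aeval a p
  have hlim : Tendsto (fun n : ℕ => star b * b - star (a ^ n * b) * (a ^ n * b)) atTop
      (𝓝 (star b * b)) := by
    have hcont : Continuous fun c : A => star b * b - star (c * b) * (c * b) := by fun_prop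
    simpa only [Function.comp_def, zero_mul, mul_zero, sub_zero] using
      (hcont.tendsto 0).comp (tendsto_pow_atTop_nhds_zero_of_norm_lt_one ha)
  have hle : star b * b ≤ algebraMap ℝ A (M ^ 2) :=
    le_of_tendsto' hlim (star_aeval_mul_aeval_sub_le ha.le hp)
  rw [← CStarAlgebra.norm_le_iff_le_algebraMap _ (sq_nonneg M) (star_mul_self_nonneg b),
    CStarRing.norm_star_mul_self, ← sq] at hle
  exact le_of_sq_le_sq hle hM

theorem norm_aeval_le_of_norm_le_one (ha : ‖a‖ ≤ 1)
    (hp : ∀ z ∈ sphere (0 : ℂ) 1, ‖p.eval z‖ ≤ M) : ‖aeval a p‖ ≤ M := by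
  have hlim : Tendsto (fun r : ℝ => ‖aeval (r • a) p‖) (𝓝[<] 1) (𝓝 ‖aeval a p‖) := by
    have hcont : Continuous fun r : ℝ => ‖aeval (r • a) p‖ :=
      (p.continuous_aeval.comp (continuous_id.smul continuous_const)).norm
    simpa using (hcont.tendsto 1).mono_left nhdsWithin_le_nhds
  refine le_of_tendsto hlim ?_
  filter_upwards [Ioo_mem_nhdsLT zero_lt_one] with r hr
  have hra : ‖r • a‖ < 1 := by
    rw [norm_smul, Real.norm_of_nonneg hr.1.le]
    exact mul_lt_one_of_nonneg_of_lt_one_left hr.1.le hr.2 ha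
  exact norm_aeval_le_of_norm_lt_one hra hp

end CStarAlgebra

theorem von_neumann_inequality_general {A : Type*} [CStarAlgebra A] (a : A) (ha : ‖a‖ ≤ 1)
    (p : ℂ[X]) : ‖aeval a p‖ ≤ sSup ((fun z => ‖p.eval z‖) '' closedBall (0 : ℂ) 1) :=
  norm_aeval_le_of_norm_le_one ha fun _ hz =>
    le_csSup ((isCompact_closedBall 0 1).image p.continuous.norm).bddAbove
      (Set.mem_image_of_mem _ (sphere_subset_closedBall hz))

/-- **Von Neumann's inequality.** If `T` is a contraction on a complex Hilbert space and `p`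
is a polynomial with complex coefficients, then `‖p(T)‖ ≤ sup_{|z| ≤ 1} |p(z)|`. -/
theorem von_neumann_inequality
    {H : Type*} [NormedAddCommGroup H] [InnerProductSpace ℂ H] [CompleteSpace H]
    (T : H →L[ℂ] H) (hT : ‖T‖ ≤ 1) (p : Polynomial ℂ) :
    ‖Polynomial.aeval T p‖ ≤ sSup ((fun z => ‖p.eval z‖) '' closedBall (0 : ℂ) 1) :=
  von_neumann_inequality_general T hT p
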